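/- arXiv:1307.5383 — 2 statements merged into one kernel-verified Lean document; each statement's English description precedes it below -/
import Mathlib

section
/- For all 1 ≤ i < k ≤ n − 1, the element σᵢ commutes with the product (σ_k σ_{k−1}⋯σ₁)(σ₁σ₂⋯σ_k); equivalently, σᵢ · Q_{k+1}P_{k+1} = Q_{k+1}P_{k+1} · σᵢ. -/
/-- `Qb σ k = σ_{k-1} σ_{k-2} ⋯ σ₁` (with `Qb σ 1 = 1`). -/
def Qb {G : Type*} [Group G] (σ : ℕ → G) : ℕ → G
  | 0 => 1
  | 1 => 1
  | (k+2) => σ (k+1) * Qb σ (k+1)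

/-- `Pb σ k = σ₁ σ₂ ⋯ σ_{k-1}` (with `Pb σ 1 = 1`). -/
def Pb {G : Type*} [Group G] (σ : ℕ → G) : ℕ → G
  | 0 => 1
  | 1 => 1
  | (k+2) => Pb σ (k+1) * σ (k+1)

/-- The torsion `Tb σ k = (σ₁)(σ₂σ₁)⋯(σ_{k-1}⋯σ₁) = Q₁ Q₂ ⋯ Q_k` (with `Tb σ 1 = 1`). -/
def Tb {G : Type*} [Group G] (σ : ℕ → G) : ℕ → G
  | 0 => 1
  | (k+1) => Tb σ k * Qb σ (k+1)

theorem Qb_far {G : Type*} [Group G] (n : ℕ) (σ : ℕ → G)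
    (hcomm : ∀ i j : ℕ, 1 ≤ i → i + 1 < j → j + 1 ≤ n → σ i * σ j = σ j * σ i)
    (j : ℕ) (hj : j + 1 ≤ n) (m : ℕ) (hm : m < j) :
    Commute (σ j) (Qb σ m) ∧ Commute (σ j) (Pb σ m) := by
  induction m with
  | zero => simp [Qb, Pb]
  | succ m ih =>
    cases m with
    | zero => simp [Qb, Pb]
    | succ m =>
      have h := ih (by omega)
      have c : Commute (σ j) (σ (m + 1)) := (hcomm (m + 1) j (by omega) (by omega) hj).symm
      exact ⟨c.mul_right h.1, h.2.mul_right c⟩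

theorem Qb_shift {G : Type*} [Group G] (n : ℕ) (σ : ℕ → G)
    (hcomm : ∀ i j : ℕ, 1 ≤ i → i + 1 < j → j + 1 ≤ n → σ i * σ j = σ j * σ i)
    (hbraid : ∀ i : ℕ, 1 ≤ i → i + 2 ≤ n →
      σ i * σ (i + 1) * σ i = σ (i + 1) * σ i * σ (i + 1))
    (i k : ℕ) (hk : i + 1 ≤ k) (hi : 1 ≤ i) (hkn : k + 1 ≤ n) :
    σ i * Qb σ (k + 1) = Qb σ (k + 1) * σ (i + 1) ∧
    σ (i + 1) * Pb σ (k + 1) = Pb σ (k + 1) * σ i := by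
  induction k, hk using Nat.le_induction with
  | base =>
    obtain ⟨j, rfl⟩ : ∃ j, i = j + 1 := ⟨i - 1, by omega⟩
    obtain ⟨hq, hp⟩ := Qb_far n σ hcomm (j + 1 + 1) (by omega) (j + 1) (by omega)
    have b := hbraid (j + 1) (by omega) (by omega)
    have hq' := hq.eq
    have hp' := hp.eq
    constructor
    · change σ (j+1) * (σ (j+1+1) * (σ (j+1) * Qb σ (j+1))) =
        (σ (j+1+1) * (σ (j+1) * Qb σ (j+1))) * σ (j+1+1)
      simp only [← mul_assoc]
      rw [b, mul_assoc, hq', ← mul_assoc]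
    · change σ (j+1+1) * (Pb σ (j+1) * σ (j+1) * σ (j+1+1)) =
        (Pb σ (j+1) * σ (j+1) * σ (j+1+1)) * σ (j+1)
      simp only [← mul_assoc]
      rw [hp']
      simp only [mul_assoc] at b ⊢
      rw [b]
  | succ k hk ih =>
    obtain ⟨h1, h2⟩ := ih (by omega)
    have c := hcomm i (k + 1) hi (by omega) (by omega)
    constructor
    · change σ i * (σ (k+1) * Qb σ (k+1)) = (σ (k+1) * Qb σ (k+1)) * σ (i+1)
      rw [← mul_assoc, c, mul_assoc, h1, mul_assoc]
    · change σ (i+1) * (Pb σ (k+1) * σ (k+1)) = (Pb σ (k+1) * σ (k+1)) * σ i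
      rw [← mul_assoc, h2, mul_assoc, c, mul_assoc]

/-- For `1 ≤ i < k ≤ n − 1`, the element `σᵢ` commutes with
`(σ_k σ_{k−1}⋯σ₁)(σ₁σ₂⋯σ_k) = Q_{k+1} P_{k+1}`. -/
theorem sigma_commutes_QP {G : Type*} [Group G] (n : ℕ) (hn : 1 ≤ n)
    (σ : ℕ → G)
    (hcomm : ∀ i j : ℕ, 1 ≤ i → i + 1 < j → j + 1 ≤ n → σ i * σ j = σ j * σ i)
    (hbraid : ∀ i : ℕ, 1 ≤ i → i + 2 ≤ n →
      σ i * σ (i + 1) * σ i = σ (i + 1) * σ i * σ (i + 1))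
    (i k : ℕ) (hi : 1 ≤ i) (hik : i < k) (hk : k + 1 ≤ n) :
    σ i * (Qb σ (k + 1) * Pb σ (k + 1)) = (Qb σ (k + 1) * Pb σ (k + 1)) * σ i := by
  obtain ⟨h1, h2⟩ := Qb_shift n σ hcomm hbraid i k hik hi hk
  rw [← mul_assoc, h1, mul_assoc, h2, mul_assoc]
end

section
/- For all 1 ≤ k ≤ n, the square of the torsion equals the k-th power of Q_k: T_k · T_k = Q_k^k. -/
def BraidHyp {G : Type*} [Group G] (n : ℕ) (σ : ℕ → G) : Prop :=
  (∀ i j : ℕ, 1 ≤ i → i + 1 < j → j + 1 ≤ n → σ i * σ j = σ j * σ i) ∧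
  (∀ i : ℕ, 1 ≤ i → i + 2 ≤ n → σ i * σ (i + 1) * σ i = σ (i + 1) * σ i * σ (i + 1))

theorem Qb_step {G : Type*} [Group G] (σ : ℕ → G) (m : ℕ) (hm : 1 ≤ m) :
    Qb σ (m + 1) = σ m * Qb σ m := by
  obtain ⟨m, rfl⟩ := Nat.exists_eq_add_of_le' hm
  rfl

theorem Pb_step {G : Type*} [Group G] (σ : ℕ → G) (m : ℕ) (hm : 1 ≤ m) :
    Pb σ (m + 1) = Pb σ m * σ m := by
  obtain ⟨m, rfl⟩ := Nat.exists_eq_add_of_le' hm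
  rfl

theorem Qb_comm {G : Type*} [Group G] {n : ℕ} {σ : ℕ → G} (h : BraidHyp n σ)
    (j : ℕ) (hj : j + 1 ≤ n) (m : ℕ) (hm : m < j) : Commute (Qb σ m) (σ j) := by
  induction m with
  | zero => exact Commute.one_left _
  | succ m ih =>
    rcases Nat.eq_zero_or_pos m with rfl | h0
    · exact Commute.one_left _
    · rw [Qb_step σ m h0]
      exact Commute.mul_left (h.1 m j h0 hm hj) (ih (by omega))

theorem Tb_comm {G : Type*} [Group G] {n : ℕ} {σ : ℕ → G} (h : BraidHyp n σ)
    (j : ℕ) (hj : j + 1 ≤ n) (m : ℕ) (hm : m < j) : Commute (Tb σ m) (σ j) := by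
  induction m with
  | zero => exact Commute.one_left _
  | succ m ih => exact Commute.mul_left (ih (by omega)) (Qb_comm h j hj _ hm)

theorem Qb_shift_s5 {G : Type*} [Group G] {n : ℕ} {σ : ℕ → G} (h : BraidHyp n σ)
    (i : ℕ) (hi : 1 ≤ i) (m : ℕ) (hm : i + 2 ≤ m) (hmn : m ≤ n) :
    Qb σ m * σ (i + 1) = σ i * Qb σ m := by
  induction m, hm using Nat.le_induction with
  | base =>
    have e : Qb σ (i + 2) = σ (i + 1) * (σ i * Qb σ i) := by
      rw [← Qb_step σ i hi]; exact Qb_step σ (i + 1) (by omega)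
    have c := (Qb_comm h (i + 1) (by omega) i (by omega)).eq
    have b := h.2 i hi hmn
    calc Qb σ (i + 2) * σ (i + 1) = σ (i + 1) * σ i * (Qb σ i * σ (i + 1)) := by
          rw [e]; simp only [mul_assoc]
      _ = σ (i + 1) * σ i * σ (i + 1) * Qb σ i := by rw [c]; simp only [mul_assoc]
      _ = σ i * Qb σ (i + 2) := by rw [← b, e]; simp only [mul_assoc]
  | succ m hm ih =>
    rw [Qb_step σ m (by omega), mul_assoc, ih (by omega), ← mul_assoc, ← mul_assoc,
      h.1 i m hi (by omega) hmn]

theorem Qb_pow_shift {G : Type*} [Group G] {n : ℕ} {σ : ℕ → G} (h : BraidHyp n σ)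
    (m : ℕ) (hmn : m + 1 ≤ n) (j i : ℕ) (hi : 1 ≤ i) (hij : i + j = m) :
    Qb σ (m + 1) ^ j * σ m = σ i * Qb σ (m + 1) ^ j := by
  induction j generalizing i with
  | zero => subst hij; simp
  | succ j ih =>
    rw [pow_succ', mul_assoc, ih (i + 1) (by omega) (by omega), ← mul_assoc,
      Qb_shift_s5 h i hi (m + 1) (by omega) hmn, mul_assoc]

theorem Pb_Qb_pow {G : Type*} [Group G] {n : ℕ} {σ : ℕ → G} (h : BraidHyp n σ)
    (m : ℕ) (hmn : m + 1 ≤ n) (j i : ℕ) (hij : i + j = m) :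
    Pb σ (i + 1) * Qb σ (m + 1) ^ j = Pb σ (m + 1) * Qb σ m ^ j := by
  induction j generalizing i with
  | zero => subst hij; simp
  | succ j ih =>
    have e := ih (i + 1) (by omega)
    rw [pow_succ (Qb σ m), ← mul_assoc, ← e, Pb_step σ (i + 1) (by omega),
      mul_assoc (Pb σ (i + 1)), ← Qb_pow_shift h m hmn j (i + 1) (by omega) (by omega),
      pow_succ, mul_assoc, mul_assoc, ← Qb_step σ m (by omega)]

theorem Tb_Qb {G : Type*} [Group G] {n : ℕ} {σ : ℕ → G} (h : BraidHyp n σ)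
    (m : ℕ) (hmn : m + 1 ≤ n) :
    Tb σ m * Qb σ (m + 1) = Pb σ (m + 1) * Tb σ m := by
  induction m with
  | zero => simp [Tb, Qb, Pb]
  | succ m ih =>
    have c := (Tb_comm h (m + 1) hmn m (by omega)).eq
    have t : Tb σ (m + 1) = Tb σ m * Qb σ (m + 1) := rfl
    rw [Qb_step σ (m + 1) (by omega), Pb_step σ (m + 1) (by omega)]
    calc Tb σ (m + 1) * (σ (m + 1) * Qb σ (m + 1))
        = Pb σ (m + 1) * (Tb σ m * σ (m + 1)) * Qb σ (m + 1) := by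
          rw [t, ih (by omega)]; simp only [mul_assoc]
      _ = Pb σ (m + 1) * σ (m + 1) * Tb σ (m + 1) := by
          rw [c, t]; simp only [mul_assoc]

/-- For `1 ≤ k ≤ n`, the square of the torsion equals `Q_k^k`. -/
theorem torsion_sq_eq_Q_pow {G : Type*} [Group G] (n : ℕ) (hn : 1 ≤ n)
    (σ : ℕ → G)
    (hcomm : ∀ i j : ℕ, 1 ≤ i → i + 1 < j → j + 1 ≤ n → σ i * σ j = σ j * σ i)
    (hbraid : ∀ i : ℕ, 1 ≤ i → i + 2 ≤ n →
      σ i * σ (i + 1) * σ i = σ (i + 1) * σ i * σ (i + 1))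
    (k : ℕ) (hk1 : 1 ≤ k) (hk : k ≤ n) :
    Tb σ k * Tb σ k = (Qb σ k) ^ k := by
  have h : BraidHyp n σ := ⟨hcomm, hbraid⟩
  clear hk1
  induction k with
  | zero => simp [Tb]
  | succ m ih =>
    have t : Tb σ (m + 1) = Tb σ m * Qb σ (m + 1) := rfl
    have e := Pb_Qb_pow h m hk m 0 (by omega)
    have p : Pb σ (0 + 1) = 1 := rfl
    rw [p, one_mul] at e
    calc Tb σ (m + 1) * Tb σ (m + 1)
        = Pb σ (m + 1) * (Tb σ m * Tb σ m) * Qb σ (m + 1) := by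
          nth_rewrite 1 [t]
          rw [Tb_Qb h m hk, t]; simp only [mul_assoc]
      _ = Qb σ (m + 1) ^ (m + 1) := by rw [ih (by omega), ← e, pow_succ]
end
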